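/- Let p = 1. There exist absolute constants C, c, c₁, c₂ ∈ (0,∞) such that for every m ∈ ℕ, every 1 ≤ n < m, and all semiaxes σ₁ ≥ σ₂ ≥ … ≥ σ_m > 0, if G_{n,m} is an n×m random matrix with i.i.d. standard Gaussian entries, then with probability at least 1 − c₁·exp(−c₂·n) one has rad(E^m_{1,σ}, ker G_{n,m}) ≤ C·n^{−1/2}·sup_{k ≤ j ≤ m} σ_j·√(log j + 1), where k := max(1, ⌈c·n⌉). -/

import Mathlib

open MeasureTheory ProbabilityTheory
open scoped ENNReal NNReal

/-- The `ℓ_p`-(quasi-)norm on `ℝ^m`, for `0 < p ≤ ∞`. -/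
noncomputable def lpnorm (p : ℝ≥0∞) {m : ℕ} (x : Fin m → ℝ) : ℝ :=
  if p = ∞ then ⨆ j, |x j| else (∑ j, |x j| ^ p.toReal) ^ (1 / p.toReal)

/-- The `ℓ_p`-ellipsoid with semiaxes `σ`. -/
noncomputable def ellipsoid (p : ℝ≥0∞) {m : ℕ} (σ : Fin m → ℝ) : Set (Fin m → ℝ) :=
  {x | lpnorm p (fun j => x j / σ j) ≤ 1}

/-- `rad_q(K, E)`: the supremum of the `ℓ_q`-norm over `K ∩ E`. -/
noncomputable def radq (q : ℝ≥0∞) {m : ℕ} (K E : Set (Fin m → ℝ)) : ℝ :=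
  sSup (lpnorm q '' (K ∩ E))

/-- The distribution of an `n × m` random matrix with i.i.d. standard Gaussian entries. -/
noncomputable def gaussianMatrix (n m : ℕ) : Measure (Fin n → Fin m → ℝ) :=
  Measure.pi fun _ : Fin n => Measure.pi fun _ : Fin m => gaussianReal 0 1

/-- The kernel of a matrix `A ∈ ℝ^{n×m}`, as a subset of `ℝ^m`. -/
def kerSet {n m : ℕ} (A : Fin n → Fin m → ℝ) : Set (Fin m → ℝ) :=
  {x | ∀ i, ∑ j, A i j * x j = 0}

/-- The Hölder conjugate `p*` of `p ∈ (1, ∞]`, as a real number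
(with the convention `(∞ : ℝ≥0∞).toReal = 0`, so `pstar ∞ = 1`). -/
noncomputable def pstar (p : ℝ≥0∞) : ℝ := (1 - 1 / p.toReal)⁻¹

lemma gexp (b : ℝ) (hb : b < 1/2) :
    ∫⁻ x, ENNReal.ofReal (Real.exp (b * x^2)) ∂(gaussianReal 0 1)
      = ENNReal.ofReal (1 / Real.sqrt (1 - 2*b)) := by
  rw [gaussianReal_of_var_ne_zero 0 one_ne_zero,
    lintegral_withDensity_eq_lintegral_mul _ (measurable_gaussianPDF 0 1) (by fun_prop)]
  have h1 : ∀ x : ℝ, (gaussianPDF 0 1 * fun x => ENNReal.ofReal (Real.exp (b * x^2))) x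
      = ENNReal.ofReal ((Real.sqrt (2 * Real.pi))⁻¹ * Real.exp (-(1/2 - b) * x^2)) := by
    intro x
    simp only [Pi.mul_apply, gaussianPDF_def, gaussianPDFReal_def]
    rw [← ENNReal.ofReal_mul (by positivity)]
    congr 1
    simp only [NNReal.coe_one, mul_one, sub_zero]
    rw [mul_assoc, ← Real.exp_add]
    congr 2
    ring
  rw [lintegral_congr h1, ← ofReal_integral_eq_lintegral_ofReal]
  · rw [integral_const_mul, integral_gaussian]
    congr 1
    rw [← Real.sqrt_inv, ← Real.sqrt_mul (by positivity), one_div (Real.sqrt _), ← Real.sqrt_inv]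
    congr 1
    have : (1 - 2*b) ≠ 0 := by linarith
    have : (1/2 - b) ≠ 0 := by linarith
    have := Real.pi_ne_zero
    field_simp
  · exact (integrable_exp_neg_mul_sq (by linarith)).const_mul _
  · exact Filter.Eventually.of_forall fun x => by positivity

lemma row_law (m : ℕ) (y : Fin m → ℝ) :
    (Measure.pi fun _ : Fin m => gaussianReal 0 1).map (fun a => ∑ j, a j * y j)
      = gaussianReal 0 (∑ j, Real.toNNReal (y j ^ 2)) := by
  have hind : iIndepFun (fun (j : Fin m) (a : Fin m → ℝ) => a j * y j)
      (Measure.pi fun _ : Fin m => gaussianReal 0 1) :=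
    iIndepFun_pi (X := fun j (t : ℝ) => t * y j) (fun j => by fun_prop)
  have key : ∀ s : Finset (Fin m),
      (Measure.pi fun _ : Fin m => gaussianReal 0 1).map (∑ j ∈ s, fun a : Fin m → ℝ => a j * y j)
      = gaussianReal 0 (∑ j ∈ s, Real.toNNReal (y j ^ 2)) := by
    intro s
    induction s using Finset.induction_on with
    | empty =>
      simp only [Finset.sum_empty, gaussianReal_zero_var]
      change Measure.map (fun _ => (0:ℝ)) _ = _
      rw [Measure.map_const]; simp
    | insert i s hi ih =>
      rw [Finset.sum_insert hi, Finset.sum_insert hi]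
      have h := gaussianReal_add_gaussianReal_of_indepFun (m₁ := 0) (m₂ := 0)
        (v₁ := Real.toNNReal (y i ^ 2))
        (v₂ := ∑ j ∈ s, Real.toNNReal (y j ^ 2))
        (hind.indepFun_finsetSum_of_notMem (fun j => by fun_prop) hi).symm ?_ ih
      · simpa using h
      · have h2 : (fun a : Fin m → ℝ => a i * y i) = (fun t => t * y i) ∘ (fun a => a i) := rfl
        rw [h2, ← Measure.map_map (by fun_prop) (by fun_prop),
          (measurePreserving_eval (fun _ : Fin m => gaussianReal 0 1) i).map_eq,
          gaussianReal_map_mul_const]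
        simp only [mul_zero, mul_one]
        congr 1
        ext
        simp [Real.toNNReal_of_nonneg (sq_nonneg (y i))]
  have := key Finset.univ
  rw [← this]
  congr 1
  ext a; simp

lemma mat_law (n m : ℕ) (y : Fin m → ℝ) :
    (gaussianMatrix n m).map (fun A i => ∑ j, A i j * y j)
      = Measure.pi fun _ : Fin n => gaussianReal 0 (∑ j, Real.toNNReal (y j ^ 2)) := by
  rw [gaussianMatrix, Measure.pi_map_pi (f := fun _ (a : Fin m → ℝ) => ∑ j, a j * y j)
    (fun i => Measurable.aemeasurable (by fun_prop))]
  simp_rw [row_law]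

lemma transpose_law (n m : ℕ) :
    (gaussianMatrix n m).map (fun A j i => A i j) = gaussianMatrix m n := by
  have h := fun a b : ℕ => Measure.infinitePi_map_curry
    (fun (_ : Fin a) (_ : Fin b) => gaussianReal 0 1)
  simp only [Measure.infinitePi_eq_pi] at h
  rw [gaussianMatrix, gaussianMatrix, ← h n m, ← h m n, Measure.map_map (by fun_prop) (by fun_prop)]
  have h3 := (measurePreserving_piCongrLeft
    (fun _ : Fin m × Fin n => gaussianReal 0 1) (Equiv.prodComm (Fin n) (Fin m))).map_eq
  rw [← h3, Measure.map_map (by fun_prop) (by fun_prop)]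
  congr 1

lemma col_law (n m : ℕ) (v : Fin n → ℝ) :
    (gaussianMatrix n m).map (fun A j => ∑ i, A i j * v i)
      = Measure.pi fun _ : Fin m => gaussianReal 0 (∑ j, Real.toNNReal (v j ^ 2)) := by
  rw [← mat_law m n v, ← transpose_law n m, Measure.map_map (by fun_prop) (by fun_prop)]
  rfl

lemma scale_law (v : ℝ≥0) :
    gaussianReal 0 v = (gaussianReal 0 1).map (fun x => Real.sqrt v * x) := by
  rw [gaussianReal_map_const_mul]
  simp only [mul_zero, mul_one]
  congr 1
  ext
  simp

lemma lint_pi {k : ℕ} (ν : Measure ℝ) [IsProbabilityMeasure ν] (f : Fin k → ℝ → ℝ≥0∞)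
    (hf : ∀ i, Measurable (f i)) :
    ∫⁻ x, ∏ i, f i (x i) ∂(Measure.pi fun _ : Fin k => ν) = ∏ i, ∫⁻ x, f i x ∂ν := by
  rw [lintegral_prod_eq_prod_lintegral_of_indepFun Finset.univ (fun i (x : Fin k → ℝ) => f i (x i))
    (iIndepFun_pi fun i => (hf i).aemeasurable) (fun i => by fun_prop)]
  refine Finset.prod_congr rfl fun i _ => ?_
  exact (measurePreserving_eval (fun _ : Fin k => ν) i).lintegral_comp (hf i)

lemma sumNN {m : ℕ} (y : Fin m → ℝ) :
    ((∑ j, Real.toNNReal (y j ^ 2) : ℝ≥0) : ℝ) = ∑ j, y j ^ 2 := by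
  rw [NNReal.coe_sum]
  exact Finset.sum_congr rfl fun j _ => Real.coe_toNNReal _ (sq_nonneg _)

lemma lower_tail (n m : ℕ) (y : Fin m → ℝ) (hy : 0 < ∑ j, y j ^ 2) :
    gaussianMatrix n m {A | ∑ i, (∑ j, A i j * y j) ^ 2 ≤ (n / 4 : ℝ) * ∑ j, y j ^ 2}
      ≤ ENNReal.ofReal (Real.exp (-(3/10) * n)) := by
  set V := ∑ j, y j ^ 2 with hV
  set F : (Fin n → ℝ) → ℝ≥0∞ := fun r => ∏ i, ENNReal.ofReal (Real.exp (-(3/2) / V * (r i) ^ 2))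
    with hF
  have hFm : Measurable F := by
    apply Finset.measurable_prod
    intro i _
    fun_prop
  have hI : ∫⁻ A, F (fun i => ∑ j, A i j * y j) ∂(gaussianMatrix n m)
      = ENNReal.ofReal ((1/2 : ℝ) ^ n) := by
    have := lintegral_map (μ := gaussianMatrix n m) (f := F)
      (g := fun A i => ∑ j, A i j * y j) hFm (by fun_prop)
    rw [← this, mat_law, hF,
      lint_pi _ (fun _ x => ENNReal.ofReal (Real.exp (-(3/2) / V * x ^ 2))) (fun i => by fun_prop)]
    rw [scale_law, Finset.prod_const, Finset.card_univ, Fintype.card_fin,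
      lintegral_map (by fun_prop) (by fun_prop), ENNReal.ofReal_pow (by norm_num)]
    congr 1
    have h := gexp (-(3/2)) (by norm_num)
    have h4 : Real.sqrt (1 - 2 * (-(3/2))) = 2 := by
      rw [show (1 - 2 * (-(3/2)) : ℝ) = 2 ^ 2 by norm_num]
      exact Real.sqrt_sq (by norm_num)
    rw [h4] at h
    rw [← h]
    refine lintegral_congr fun x => ?_
    congr 2
    rw [mul_pow, Real.sq_sqrt (NNReal.coe_nonneg _), sumNN, ← hV]
    field_simp
  have hM := meas_ge_le_lintegral_div (μ := gaussianMatrix n m)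
    (f := fun A => F (fun i => ∑ j, A i j * y j))
    (hFm.comp (by fun_prop)).aemeasurable
    (ε := ENNReal.ofReal (Real.exp (-(3/8) * n))) (by simp [Real.exp_pos]) (by simp)
  refine (measure_mono ?_).trans (hM.trans ?_)
  · intro A hA
    simp only [Set.mem_ofPred_eq] at hA ⊢
    simp only [hF]
    rw [← ENNReal.ofReal_prod_of_nonneg (fun i _ => (Real.exp_pos _).le), ← Real.exp_sum]
    apply ENNReal.ofReal_le_ofReal
    apply Real.exp_le_exp.2
    rw [← Finset.mul_sum]
    have : (-(3/2) / V) * ((n/4 : ℝ) * V) ≤ (-(3/2) / V) * ∑ i, (∑ j, A i j * y j) ^ 2 := by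
      apply mul_le_mul_of_nonpos_left hA
      apply div_nonpos_of_nonpos_of_nonneg <;> linarith
    refine le_trans (le_of_eq ?_) this
    field_simp
    ring
  · rw [hI, ← ENNReal.ofReal_div_of_pos (Real.exp_pos _)]
    apply ENNReal.ofReal_le_ofReal
    rw [div_le_iff₀ (Real.exp_pos _), ← Real.exp_add]
    have h2 : (1/2 : ℝ) ≤ Real.exp (-(27/40)) := by
      have := Real.log_two_gt_d9
      rw [← Real.log_le_iff_le_exp (by norm_num)]
      rw [one_div, Real.log_inv]
      linarith
    calc (1/2 : ℝ) ^ n ≤ (Real.exp (-(27/40))) ^ n := by gcongr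
      _ = Real.exp (-(3/10) * n + -(3/8) * n) := by
        rw [← Real.exp_nat_mul]; congr 1; ring

lemma upper_tail (n m : ℕ) (v : Fin n → ℝ) (hv : ∑ i, v i ^ 2 ≤ 1) (s : Fin m → ℝ) (K : ℝ) :
    gaussianMatrix n m {A | K ≤ ∑ j, max ((∑ i, A i j * v i) ^ 2 - 8 * s j) 0}
      ≤ ENNReal.ofReal (Real.exp (2 * ∑ j, Real.exp (-2 * s j) - K / 4)) := by
  set F : (Fin m → ℝ) → ℝ≥0∞ := fun r => ∏ j, ENNReal.ofReal
    (Real.exp (max ((r j) ^ 2 - 8 * s j) 0 / 4)) with hF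
  have hFm : Measurable F := by
    apply Finset.measurable_prod
    intro i _
    fun_prop
  have hI : ∫⁻ A, F (fun j => ∑ i, A i j * v i) ∂(gaussianMatrix n m)
      ≤ ENNReal.ofReal (Real.exp (2 * ∑ j, Real.exp (-2 * s j))) := by
    have := lintegral_map (μ := gaussianMatrix n m) (f := F)
      (g := fun A j => ∑ i, A i j * v i) hFm (by fun_prop)
    rw [← this, col_law, hF,
      lint_pi _ (fun j x => ENNReal.ofReal (Real.exp (max (x ^ 2 - 8 * s j) 0 / 4)))
        (fun i => by fun_prop)]
    rw [scale_law, Finset.mul_sum, Real.exp_sum,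
      ENNReal.ofReal_prod_of_nonneg (fun i _ => (Real.exp_pos _).le)]
    refine Finset.prod_le_prod' fun j _ => ?_
    rw [lintegral_map (by fun_prop) (by fun_prop)]
    have h := gexp (1/4) (by norm_num)
    calc ∫⁻ x, ENNReal.ofReal (Real.exp (max ((Real.sqrt (∑ j, Real.toNNReal (v j ^ 2) : ℝ≥0) * x) ^ 2
              - 8 * s j) 0 / 4)) ∂(gaussianReal 0 1)
        ≤ ∫⁻ x, (1 + ENNReal.ofReal (Real.exp (-2 * s j)) *
            ENNReal.ofReal (Real.exp (1/4 * x ^ 2))) ∂(gaussianReal 0 1) := by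
          refine lintegral_mono fun x => ?_
          rw [← ENNReal.ofReal_mul (Real.exp_pos _).le, ← Real.exp_add, ← ENNReal.ofReal_one,
            ← ENNReal.ofReal_add zero_le_one (Real.exp_pos _).le]
          apply ENNReal.ofReal_le_ofReal
          rw [mul_pow, Real.sq_sqrt (NNReal.coe_nonneg _), sumNN]
          rcases max_cases ((∑ i, v i ^ 2) * x ^ 2 - 8 * s j) 0 with ⟨h1, h2⟩ | ⟨h1, h2⟩
          · rw [h1]
            have : Real.exp (((∑ i, v i ^ 2) * x ^ 2 - 8 * s j) / 4)
                ≤ Real.exp (-2 * s j + 1/4 * x ^ 2) := by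
              apply Real.exp_le_exp.2
              nlinarith [sq_nonneg x]
            linarith
          · rw [h1]
            simp [Real.exp_nonneg]
      _ = 1 + ENNReal.ofReal (Real.exp (-2 * s j)) * ENNReal.ofReal (1 / Real.sqrt (1 - 2 * (1/4))) := by
          rw [lintegral_add_left (by fun_prop), lintegral_const_mul _ (by fun_prop), h]
          simp
      _ ≤ ENNReal.ofReal (Real.exp (2 * Real.exp (-2 * s j))) := by
          rw [← ENNReal.ofReal_mul (Real.exp_pos _).le, ← ENNReal.ofReal_one,
            ← ENNReal.ofReal_add zero_le_one (by positivity)]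
          apply ENNReal.ofReal_le_ofReal
          have h5 : 1 / Real.sqrt (1 - 2 * (1/4)) ≤ 2 := by
            rw [div_le_iff₀ (by apply Real.sqrt_pos.2; norm_num)]
            have : (1/2 : ℝ) ≤ Real.sqrt (1 - 2 * (1/4)) := by
              apply Real.le_sqrt_of_sq_le; norm_num
            linarith
          have h6 := Real.add_one_le_exp (2 * Real.exp (-2 * s j))
          nlinarith [Real.exp_pos (-2 * s j)]
  have hM := meas_ge_le_lintegral_div (μ := gaussianMatrix n m)
    (f := fun A => F (fun j => ∑ i, A i j * v i))
    (hFm.comp (by fun_prop)).aemeasurable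
    (ε := ENNReal.ofReal (Real.exp (K / 4))) (by simp [Real.exp_pos]) (by simp)
  refine (measure_mono ?_).trans (hM.trans ?_)
  · intro A hA
    simp only [Set.mem_ofPred_eq] at hA ⊢
    simp only [hF]
    rw [← ENNReal.ofReal_prod_of_nonneg (fun i _ => (Real.exp_pos _).le), ← Real.exp_sum]
    apply ENNReal.ofReal_le_ofReal
    apply Real.exp_le_exp.2
    rw [← Finset.sum_div]
    linarith
  · refine (ENNReal.div_le_div_right hI _).trans ?_
    rw [← ENNReal.ofReal_div_of_pos (Real.exp_pos _), ← Real.exp_sub]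

lemma trunc_ex (a : ℝ) : ∃ z : ℤ, (z : ℝ) ^ 2 ≤ a ^ 2 ∧ (a - z) ^ 2 ≤ 1 ∧ (a = 0 → z = 0) := by
  rcases le_total 0 a with h | h
  · refine ⟨⌊a⌋, ?_, ?_, ?_⟩
    · have h1 : (0 : ℝ) ≤ ⌊a⌋ := by exact_mod_cast Int.floor_nonneg.2 h
      exact pow_le_pow_left₀ h1 (Int.floor_le a) 2
    · have h1 := Int.floor_le a
      have h2 := Int.lt_floor_add_one a
      nlinarith
    · rintro rfl; simp
  · refine ⟨⌈a⌉, ?_, ?_, ?_⟩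
    · have h1 : (⌈a⌉ : ℝ) ≤ 0 := by exact_mod_cast Int.ceil_le.2 (by simpa using h)
      nlinarith [Int.le_ceil a]
    · have h1 := Int.le_ceil a
      have h2 := Int.ceil_lt_add_one a
      nlinarith
    · rintro rfl; simp

lemma inv_sq_sum (b : ℕ) :
    ∑ z ∈ Finset.Icc (-(b : ℤ)) b, (if z = 0 then (0 : ℝ) else 1 / (z : ℝ) ^ 2) ≤ 4 - 4 / (b + 1) := by
  induction b with
  | zero => simp
  | succ b ih =>
    have hI : Finset.Icc (-((b + 1 : ℕ) : ℤ)) ((b + 1 : ℕ) : ℤ)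
        = insert ((b : ℤ) + 1) (insert (-((b : ℤ) + 1)) (Finset.Icc (-(b : ℤ)) b)) := by
      ext z; simp only [Finset.mem_Icc, Finset.mem_insert]; omega
    rw [hI, Finset.sum_insert (by simp only [Finset.mem_Icc, Finset.mem_insert]; omega),
      Finset.sum_insert (by simp only [Finset.mem_Icc]; omega),
      if_neg (by omega), if_neg (by omega)]
    push_cast
    have hb : (0 : ℝ) ≤ b := by positivity
    have : (1 : ℝ) / (-((b : ℝ) + 1)) ^ 2 = 1 / ((b : ℝ) + 1) ^ 2 := by
      congr 1; ring
    have e : (1 : ℝ) / (-1 + -(b : ℝ)) ^ 2 = 1 / ((b : ℝ) + 1) ^ 2 := by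
      congr 1; ring
    have h3 : 2 * (1 / ((b : ℝ) + 1) ^ 2) ≤ 4 / (b + 1) - 4 / (b + 1 + 1) := by
      rw [div_sub_div _ _ (by positivity) (by positivity), mul_one_div,
        div_le_div_iff₀ (by positivity) (by positivity)]
      nlinarith [mul_nonneg hb hb, mul_nonneg hb (mul_nonneg hb hb)]
    simp only [neg_add_rev, e]
    linarith

lemma net (m : ℕ) (s : Fin m → ℝ) (hs : ∀ j, 0 ≤ s j) (d D ε : ℝ) (hd : 0 < d) (hε : 0 < ε) :
    ∃ N : Finset (Fin m → ℝ),
      (N.card : ℝ) ≤ Real.exp (d + 2 * D + (4 / ε ^ 2) * ∑ j, Real.exp (-2 * s j)) ∧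
      (∀ v ∈ N, ∑ j, v j ^ 2 ≤ 1) ∧
      ∀ y : Fin m → ℝ, ∑ j, y j ^ 2 ≤ 1 →
        ((Finset.univ.filter (fun j => y j ≠ 0)).card : ℝ) ≤ d →
        ∑ j, (if y j = 0 then 0 else s j) ≤ D →
        ∃ v ∈ N, ∑ j, (y j - v j) ^ 2 ≤ ε ^ 2 ∧ ∀ j, y j = 0 → v j = 0 := by
  classical
  set h := ε / Real.sqrt d with hh
  have hpos : 0 < h := div_pos hε (Real.sqrt_pos.2 hd)
  have hsq : h ^ 2 = ε ^ 2 / d := by rw [hh, div_pow, Real.sq_sqrt hd.le]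
  obtain ⟨B, hB⟩ := exists_nat_ge (d / ε ^ 2)
  set N0 : Finset (Fin m → ℤ) :=
    (Fintype.piFinset (fun _ => Finset.Icc (-(B : ℤ)) B)).filter
      (fun z => ∑ j, (z j : ℝ) ^ 2 ≤ d / ε ^ 2 ∧ ∑ j, (if z j = 0 then 0 else s j) ≤ D) with hN0
  refine ⟨N0.image (fun z j => h * (z j : ℝ)), ?_, ?_, ?_⟩
  · set φ : Fin m → ℤ → ℝ := fun j z =>
      Real.exp (-(ε ^ 2 * (z : ℝ) ^ 2) - 2 * (if z = 0 then 0 else s j)) with hφ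
    have h1 : ∀ z ∈ N0, (1 : ℝ) ≤ Real.exp (d + 2 * D) * ∏ j, φ j (z j) := by
      intro z hz
      obtain ⟨-, hz1, hz2⟩ := Finset.mem_filter.1 hz
      simp only [hφ]
      rw [← Real.exp_sum, ← Real.exp_add]
      apply Real.one_le_exp
      rw [Finset.sum_sub_distrib, Finset.sum_neg_distrib, ← Finset.mul_sum, ← Finset.mul_sum]
      rw [le_div_iff₀ (by positivity)] at hz1
      linarith
    have h2 : ∀ j, ∑ z ∈ Finset.Icc (-(B : ℤ)) B, φ j z
        ≤ Real.exp (4 / ε ^ 2 * Real.exp (-2 * s j)) := by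
      intro j
      have h3 : ∀ z ∈ Finset.Icc (-(B : ℤ)) B, φ j z ≤ (if z = 0 then 1 else 0) +
          Real.exp (-2 * s j) * (1 / ε ^ 2) * (if z = 0 then (0 : ℝ) else 1 / (z : ℝ) ^ 2) := by
        intro z _
        simp only [hφ]
        split_ifs with hz
        · simp [hz]
        · have hz' : (0 : ℝ) < (z : ℝ) ^ 2 := by positivity
          rw [show -(ε ^ 2 * (z : ℝ) ^ 2) - 2 * s j = -2 * s j + -(ε ^ 2 * (z : ℝ) ^ 2) by ring,
            Real.exp_add, zero_add, mul_assoc]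
          apply mul_le_mul_of_nonneg_left _ (Real.exp_pos _).le
          rw [Real.exp_neg, div_mul_div_comm, one_mul, ← one_div]
          apply one_div_le_one_div_of_le (by positivity)
          linarith [Real.add_one_le_exp (ε ^ 2 * (z : ℝ) ^ 2)]
      refine (Finset.sum_le_sum h3).trans ?_
      rw [Finset.sum_add_distrib, ← Finset.mul_sum, Finset.sum_ite_eq', if_pos (by simp)]
      have h4 := inv_sq_sum B
      have h5 : (0 : ℝ) ≤ 4 / (B + 1) := by positivity
      have h6 := mul_le_mul_of_nonneg_left (h4.trans (sub_le_self _ h5))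
        (show 0 ≤ Real.exp (-2 * s j) * (1 / ε ^ 2) by positivity)
      have h7 := Real.add_one_le_exp (4 / ε ^ 2 * Real.exp (-2 * s j))
      have h8 : Real.exp (-2 * s j) * (1 / ε ^ 2) * 4 = 4 / ε ^ 2 * Real.exp (-2 * s j) := by ring
      linarith
    calc ((N0.image (fun z j => h * (z j : ℝ))).card : ℝ) ≤ N0.card := by
          exact_mod_cast Finset.card_image_le
      _ = ∑ z ∈ N0, (1 : ℝ) := by simp
      _ ≤ ∑ z ∈ N0, Real.exp (d + 2 * D) * ∏ j, φ j (z j) := Finset.sum_le_sum h1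
      _ ≤ ∑ z ∈ Fintype.piFinset (fun _ : Fin m => Finset.Icc (-(B : ℤ)) B),
            Real.exp (d + 2 * D) * ∏ j, φ j (z j) := by
          apply Finset.sum_le_sum_of_subset_of_nonneg (Finset.filter_subset _ _)
          intro z _ _
          have : ∀ j, 0 ≤ φ j (z j) := fun j => (Real.exp_pos _).le
          exact mul_nonneg (Real.exp_pos _).le (Finset.prod_nonneg fun j _ => this j)
      _ = Real.exp (d + 2 * D) * ∏ j, ∑ z ∈ Finset.Icc (-(B : ℤ)) B, φ j z := by
          rw [← Finset.mul_sum, Finset.prod_univ_sum]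
      _ ≤ Real.exp (d + 2 * D) * ∏ j, Real.exp (4 / ε ^ 2 * Real.exp (-2 * s j)) := by
          apply mul_le_mul_of_nonneg_left _ (Real.exp_pos _).le
          apply Finset.prod_le_prod
          · intro j _
            exact Finset.sum_nonneg fun z _ => (Real.exp_pos _).le
          · intro j _
            exact h2 j
      _ = _ := by
          rw [← Real.exp_sum, ← Finset.mul_sum, ← Real.exp_add]
  · intro v hv
    obtain ⟨z, hz, rfl⟩ := Finset.mem_image.1 hv
    obtain ⟨-, hz1, hz2⟩ := Finset.mem_filter.1 hz
    simp only [mul_pow]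
    rw [← Finset.mul_sum, hsq]
    calc ε ^ 2 / d * ∑ j, (z j : ℝ) ^ 2 ≤ ε ^ 2 / d * (d / ε ^ 2) := by gcongr
      _ = 1 := by field_simp
  · intro y hy hc hD
    choose z hz1 hz2 hz3 using fun j => trunc_ex (y j / h)
    have hz0 : ∀ j, y j = 0 → z j = 0 := fun j hj => hz3 j (by simp [hj])
    have hzs : ∑ j, (z j : ℝ) ^ 2 ≤ d / ε ^ 2 := by
      calc ∑ j, (z j : ℝ) ^ 2 ≤ ∑ j, (y j / h) ^ 2 := Finset.sum_le_sum fun j _ => hz1 j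
        _ = (∑ j, y j ^ 2) / h ^ 2 := by rw [Finset.sum_div]; simp only [div_pow]
        _ ≤ 1 / h ^ 2 := by gcongr
        _ = d / ε ^ 2 := by rw [hsq, one_div_div]
    refine ⟨fun j => h * (z j : ℝ), Finset.mem_image.2 ⟨z, ?_, rfl⟩, ?_, ?_⟩
    · refine Finset.mem_filter.2 ⟨Fintype.mem_piFinset.2 fun j => ?_, hzs, ?_⟩
      · have h1 : (z j : ℝ) ^ 2 ≤ B := by
          refine le_trans ?_ (hzs.trans hB)
          exact Finset.single_le_sum (f := fun j => (z j : ℝ) ^ 2)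
            (fun i _ => sq_nonneg _) (Finset.mem_univ j)
        have h2 : (z j) ^ 2 ≤ (B : ℤ) := by exact_mod_cast h1
        rw [Finset.mem_Icc]
        constructor
        · nlinarith [sq_nonneg (z j + 1), sq_nonneg (z j), Int.le_self_sq (-(z j))]
        · exact (Int.le_self_sq (z j)).trans h2
      · refine le_trans (Finset.sum_le_sum fun j _ => ?_) hD
        by_cases hj : y j = 0
        · simp [hj, hz0 j hj]
        · rw [if_neg hj]
          split_ifs
          · exact hs j
          · exact le_rfl
    · calc ∑ j, (y j - h * (z j : ℝ)) ^ 2 ≤ ∑ j, (if y j ≠ 0 then h ^ 2 else 0) := by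
            refine Finset.sum_le_sum fun j _ => ?_
            by_cases hj : y j = 0
            · simp [hj, hz0 j hj]
            · rw [if_pos hj]
              have : y j - h * (z j : ℝ) = h * (y j / h - z j) := by field_simp
              rw [this, mul_pow]
              nlinarith [hz2 j, sq_nonneg h]
        _ = ((Finset.univ.filter (fun j => y j ≠ 0)).card : ℝ) * h ^ 2 := by
            rw [← Finset.sum_filter, Finset.sum_const, nsmul_eq_mul]
        _ ≤ d * h ^ 2 := by gcongr
        _ = ε ^ 2 := by rw [hsq]; field_simp
    · intro j hj
      simp [hz0 j hj]

noncomputable def nr {k : ℕ} (x : Fin k → ℝ) : ℝ := Real.sqrt (∑ j, x j ^ 2)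

lemma nr_nonneg {k : ℕ} (x : Fin k → ℝ) : 0 ≤ nr x := Real.sqrt_nonneg _

lemma nr_sq {k : ℕ} (x : Fin k → ℝ) : nr x ^ 2 = ∑ j, x j ^ 2 :=
  Real.sq_sqrt (Finset.sum_nonneg fun _ _ => sq_nonneg _)

lemma nr_eq {k : ℕ} (x : Fin k → ℝ) : nr x = ‖(WithLp.toLp 2 x : EuclideanSpace ℝ (Fin k))‖ := by
  rw [EuclideanSpace.norm_eq]; simp [nr]

lemma nr_add {k : ℕ} (x y : Fin k → ℝ) : nr (fun j => x j + y j) ≤ nr x + nr y := by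
  rw [nr_eq, nr_eq, nr_eq]
  exact norm_add_le (WithLp.toLp 2 x : EuclideanSpace ℝ (Fin k)) (WithLp.toLp 2 y)

lemma nr_smul {k : ℕ} (c : ℝ) (hc : 0 ≤ c) (x : Fin k → ℝ) : nr (fun j => c * x j) = c * nr x := by
  unfold nr
  simp only [mul_pow]
  rw [← Finset.mul_sum, Real.sqrt_mul (sq_nonneg c), Real.sqrt_sq hc]

lemma nr_inner {k : ℕ} (x y : Fin k → ℝ) : ∑ j, x j * y j ≤ nr x * nr y :=
  Real.sum_mul_le_sqrt_mul_sqrt _ _ _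

def mv {n m : ℕ} (A : Fin n → Fin m → ℝ) (y : Fin m → ℝ) : Fin n → ℝ := fun i => ∑ j, A i j * y j

lemma dual {n : ℕ} (N : Finset (Fin n → ℝ))
    (hN : ∀ y : Fin n → ℝ, ∑ j, y j ^ 2 ≤ 1 → ∃ v ∈ N, ∑ j, (y j - v j) ^ 2 ≤ (1/2 : ℝ) ^ 2)
    (u : Fin n → ℝ) (M : ℝ) (hM : 0 ≤ M) (h : ∀ v ∈ N, ∑ i, v i * u i ≤ M) : nr u ≤ 2 * M := by
  rcases (nr_nonneg u).eq_or_lt with h0 | h0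
  · rw [← h0]; linarith
  have hu : ∑ j, (u j / nr u) ^ 2 = 1 := by
    simp only [div_pow]
    rw [← Finset.sum_div, ← nr_sq, div_self (by positivity)]
  obtain ⟨v, hv, hv2⟩ := hN (fun j => u j / nr u) hu.le
  have h1 := h v hv
  have h2 := nr_inner (fun j => u j / nr u - v j) u
  have h3 : nr (fun j => u j / nr u - v j) ≤ 1/2 := by
    apply Real.sqrt_le_iff.2
    exact ⟨by norm_num, hv2⟩
  have h4 : ∑ j, (u j / nr u - v j) * u j = nr u - ∑ i, v i * u i := by
    simp only [sub_mul]
    rw [Finset.sum_sub_distrib]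
    congr 1
    have : ∀ j, u j / nr u * u j = u j ^ 2 / nr u := fun j => by ring
    simp only [this]
    rw [← Finset.sum_div, ← nr_sq]
    field_simp
  rw [h4] at h2
  nlinarith

lemma swap_sum {n m : ℕ} (A : Fin n → Fin m → ℝ) (v : Fin n → ℝ) (y : Fin m → ℝ) :
    ∑ i, v i * mv A y i = ∑ j, (∑ i, A i j * v i) * y j := by
  simp only [mv, Finset.mul_sum, Finset.sum_mul]
  rw [Finset.sum_comm]
  exact Finset.sum_congr rfl fun j _ => Finset.sum_congr rfl fun i _ => by ring

lemma upper1 {n m : ℕ} (A : Fin n → Fin m → ℝ) (s : Fin m → ℝ)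
    (N : Finset (Fin n → ℝ))
    (hN : ∀ y : Fin n → ℝ, ∑ j, y j ^ 2 ≤ 1 → ∃ v ∈ N, ∑ j, (y j - v j) ^ 2 ≤ (1/2 : ℝ) ^ 2)
    (hU : ∀ v ∈ N, ∑ j, max ((∑ i, A i j * v i) ^ 2 - 8 * s j) 0 ≤ 80 * (n : ℝ))
    (y : Fin m → ℝ) (hy : ∑ j, (if y j = 0 then 0 else s j) ≤ (n : ℝ) / 100) :
    nr (mv A y) ≤ 20 * Real.sqrt n * nr y := by
  have := dual N hN (mv A y) (10 * Real.sqrt n * nr y)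
    (mul_nonneg (by positivity) (nr_nonneg y)) ?_
  · linarith
  intro v hv
  rw [swap_sum]
  set g : Fin m → ℝ := fun j => ∑ i, A i j * v i with hg
  have h1 : ∑ j, g j * y j = ∑ j, (if y j = 0 then 0 else g j) * y j := by
    refine Finset.sum_congr rfl fun j _ => ?_
    split_ifs with h <;> simp [h]
  change ∑ j, g j * y j ≤ _
  rw [h1]
  refine (nr_inner _ _).trans ?_
  apply mul_le_mul_of_nonneg_right _ (nr_nonneg y)
  apply Real.sqrt_le_iff.2
  refine ⟨by positivity, ?_⟩
  rw [mul_pow, Real.sq_sqrt (by positivity)]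
  have h2 : ∑ j, (if y j = 0 then 0 else g j) ^ 2
      ≤ ∑ j, (max (g j ^ 2 - 8 * s j) 0 + 8 * (if y j = 0 then 0 else s j)) := by
    refine Finset.sum_le_sum fun j _ => ?_
    split_ifs with h
    · simp
    · linarith [le_max_left (g j ^ 2 - 8 * s j) 0]
  rw [Finset.sum_add_distrib, ← Finset.mul_sum] at h2
  have h3 := hU v hv
  have : (0 : ℝ) ≤ n := by positivity
  linarith

lemma term_bound (g z s t : ℝ) (hs : 0 ≤ s) (ht : 0 ≤ t) (hz : |z| ≤ t * Real.sqrt s) :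
    g * z ≤ t / 2 * max (g ^ 2 - 8 * s) 0 + 9 / 2 * (|z| * Real.sqrt s) := by
  set M := max (g ^ 2 - 8 * s) 0
  have hM0 : 0 ≤ M := le_max_right _ _
  have hM1 : g ^ 2 - 8 * s ≤ M := le_max_left _ _
  have hg : g * z ≤ |g| * |z| := by rw [← abs_mul]; exact le_abs_self _
  refine hg.trans ?_
  have hq2 : Real.sqrt s ^ 2 = s := Real.sq_sqrt hs
  rcases (Real.sqrt_nonneg s).eq_or_lt with h0 | h0
  · rw [← h0, mul_zero] at hz
    have hz0 : |z| = 0 := le_antisymm hz (abs_nonneg z)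
    rw [hz0]
    have hq : s = 0 := by rw [← hq2, ← h0]; ring
    have : z = 0 := abs_eq_zero.1 hz0
    have : 0 ≤ t / 2 * M := by positivity
    simp; linarith
  · set q := Real.sqrt s
    set r := |z| / q with hr
    have hzr : |z| = r * q := by rw [hr]; field_simp
    have hr0 : 0 ≤ r := by positivity
    have hrt : r ≤ t := by rw [hr, div_le_iff₀ h0]; exact hz
    rw [hzr]
    have h1 : |g| * q ≤ (g ^ 2 + q ^ 2) / 2 := by
      nlinarith [sq_nonneg (|g| - q), sq_abs g]
    have h2 : |g| * q ≤ (M + 9 * q ^ 2) / 2 := by rw [← hq2] at hM1; linarith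
    have h3 := mul_le_mul_of_nonneg_left h2 hr0
    have h4 := mul_le_mul_of_nonneg_right hrt hM0
    nlinarith

lemma upper2 {n m : ℕ} (A : Fin n → Fin m → ℝ) (s : Fin m → ℝ) (hs : ∀ j, 0 ≤ s j)
    (N : Finset (Fin n → ℝ)) (hn : 0 < (n : ℝ))
    (hN : ∀ y : Fin n → ℝ, ∑ j, y j ^ 2 ≤ 1 → ∃ v ∈ N, ∑ j, (y j - v j) ^ 2 ≤ (1/2 : ℝ) ^ 2)
    (hU : ∀ v ∈ N, ∑ j, max ((∑ i, A i j * v i) ^ 2 - 8 * s j) 0 ≤ 80 * (n : ℝ))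
    (z : Fin m → ℝ) (S : ℝ) (hS : 0 < S) (hz : ∀ j, |z j| ≤ 100 * S / n * Real.sqrt (s j))
    (hzS : ∑ j, |z j| * Real.sqrt (s j) ≤ S) :
    nr (mv A z) ≤ 10000 * S := by
  have := dual N hN (mv A z) (5000 * S) (by positivity) ?_
  · linarith
  intro v hv
  rw [swap_sum]
  have h1 := Finset.sum_le_sum fun j (_ : j ∈ Finset.univ) =>
    term_bound (∑ i, A i j * v i) (z j) (s j) (100 * S / n) (hs j) (by positivity) (hz j)
  refine h1.trans ?_
  rw [Finset.sum_add_distrib, ← Finset.mul_sum, ← Finset.mul_sum]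
  have h2 := mul_le_mul_of_nonneg_left (hU v hv) (show 0 ≤ 100 * S / n / 2 by positivity)
  have h3 : 100 * S / n / 2 * (80 * (n : ℝ)) = 4000 * S := by field_simp; norm_num
  linarith

lemma mv_add {n m : ℕ} (A : Fin n → Fin m → ℝ) (x y : Fin m → ℝ) :
    mv A (fun j => x j + y j) = fun i => mv A x i + mv A y i := by
  ext i; simp [mv, mul_add, Finset.sum_add_distrib]

lemma mv_smul {n m : ℕ} (A : Fin n → Fin m → ℝ) (c : ℝ) (y : Fin m → ℝ) :
    mv A (fun j => c * y j) = fun i => c * mv A y i := by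
  ext i; simp only [mv, Finset.mul_sum]
  exact Finset.sum_congr rfl fun j _ => by ring

lemma lower1 {n m : ℕ} (A : Fin n → Fin m → ℝ) (s : Fin m → ℝ) (hs : ∀ j, 0 ≤ s j)
    (N : Finset (Fin n → ℝ)) (d : ℝ)
    (hN : ∀ y : Fin n → ℝ, ∑ j, y j ^ 2 ≤ 1 → ∃ v ∈ N, ∑ j, (y j - v j) ^ 2 ≤ (1/2 : ℝ) ^ 2)
    (hU : ∀ v ∈ N, ∑ j, max ((∑ i, A i j * v i) ^ 2 - 8 * s j) 0 ≤ 80 * (n : ℝ))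
    (N2 : Finset (Fin m → ℝ))
    (hN2 : ∀ y : Fin m → ℝ, ∑ j, y j ^ 2 ≤ 1 →
        ((Finset.univ.filter (fun j => y j ≠ 0)).card : ℝ) ≤ d →
        ∑ j, (if y j = 0 then 0 else s j) ≤ (n : ℝ) / 100 →
        ∃ v ∈ N2, ∑ j, (y j - v j) ^ 2 ≤ (1/160 : ℝ) ^ 2 ∧ ∀ j, y j = 0 → v j = 0)
    (hL : ∀ v ∈ N2, 0 < ∑ j, v j ^ 2 →
      (n / 4 : ℝ) * ∑ j, v j ^ 2 ≤ ∑ i, (∑ j, A i j * v j) ^ 2)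
    (y : Fin m → ℝ) (hy1 : ((Finset.univ.filter (fun j => y j ≠ 0)).card : ℝ) ≤ d)
    (hy : ∑ j, (if y j = 0 then 0 else s j) ≤ (n : ℝ) / 100) :
    Real.sqrt n / 8 * nr y ≤ nr (mv A y) := by
  rcases (nr_nonneg y).eq_or_lt with h0 | h0
  · rw [← h0, mul_zero]; exact nr_nonneg _
  set q := Real.sqrt n with hq
  have hq0 : 0 ≤ q := Real.sqrt_nonneg _
  set c := (nr y)⁻¹ with hc
  have hcpos : 0 < c := inv_pos.2 h0
  have hiff : ∀ j, c * y j = 0 ↔ y j = 0 := fun j => by simp [hcpos.ne']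
  have hy1' : nr (fun j => c * y j) = 1 := by
    rw [nr_smul c hcpos.le, hc, inv_mul_cancel₀ h0.ne']
  obtain ⟨v, hv, hv1, hv2⟩ := hN2 (fun j => c * y j) (by rw [← nr_sq, hy1']; norm_num)
    (by simpa only [ne_eq, hiff] using hy1) (by simpa only [hiff] using hy)
  set e : Fin m → ℝ := fun j => c * y j - v j with he
  have hne : nr e ≤ 1/160 := by
    apply Real.sqrt_le_iff.2
    exact ⟨by norm_num, hv1⟩
  have h1 : (1 : ℝ) ≤ nr v + nr e := by
    rw [← hy1']
    refine le_trans (le_of_eq ?_) (nr_add v e)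
    congr 1; ext j; simp [he]
  have hvpos : 0 < ∑ j, v j ^ 2 := by
    rw [← nr_sq]
    have : 0 < nr v := by linarith
    positivity
  have h2 : q / 2 * nr v ≤ nr (mv A v) := by
    apply Real.le_sqrt_of_sq_le
    have := hL v hv hvpos
    rw [mul_pow, div_pow, hq, Real.sq_sqrt (by positivity), nr_sq]
    simp only [mv]
    norm_num at this ⊢
    exact this
  have h3 : nr (mv A e) ≤ 20 * q * nr e := by
    apply upper1 A s N hN hU
    refine le_trans (Finset.sum_le_sum fun j _ => ?_) hy
    by_cases hj : y j = 0
    · have : e j = 0 := by simp [he, hj, hv2 j ((hiff j).2 hj)]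
      simp [this, hj]
    · rw [if_neg hj]
      split_ifs
      · exact hs j
      · exact le_rfl
  have h4 : nr (mv A v) ≤ c * nr (mv A y) + nr (mv A e) := by
    have h5 : mv A v = fun i => c * mv A y i + mv A (fun j => (-1) * e j) i := by
      have := mv_add A (fun j => c * y j) (fun j => (-1) * e j)
      rw [mv_smul A c y] at this
      rw [← this]
      congr 1; ext j; simp [he]
    have h6 : nr (mv A (fun j => (-1) * e j)) = nr (mv A e) := by
      rw [mv_smul]; simp [nr]
    rw [h5]
    refine (nr_add _ _).trans ?_
    rw [h6, nr_smul c hcpos.le]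
  have h7 : q / 8 ≤ c * nr (mv A y) := by
    nlinarith [mul_le_mul_of_nonneg_left hne hq0, mul_le_mul_of_nonneg_left h1 hq0]
  calc q / 8 * nr y ≤ c * nr (mv A y) * nr y := by gcongr
    _ = nr (mv A y) := by rw [hc]; field_simp

lemma det_main {n m : ℕ} (A : Fin n → Fin m → ℝ) (s : Fin m → ℝ) (hs : ∀ j, 0 ≤ s j)
    (N : Finset (Fin n → ℝ)) (hn : 0 < (n : ℝ)) (b : ℝ)
    (hs1 : ∀ j, s j = 0 ∨ 1 ≤ s j)
    (hb : ((Finset.univ.filter (fun j => s j = 0)).card : ℝ) ≤ b)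
    (hN : ∀ y : Fin n → ℝ, ∑ j, y j ^ 2 ≤ 1 → ∃ v ∈ N, ∑ j, (y j - v j) ^ 2 ≤ (1/2 : ℝ) ^ 2)
    (hU : ∀ v ∈ N, ∑ j, max ((∑ i, A i j * v i) ^ 2 - 8 * s j) 0 ≤ 80 * (n : ℝ))
    (N2 : Finset (Fin m → ℝ))
    (hN2 : ∀ y : Fin m → ℝ, ∑ j, y j ^ 2 ≤ 1 →
        ((Finset.univ.filter (fun j => y j ≠ 0)).card : ℝ) ≤ b + n / 100 →
        ∑ j, (if y j = 0 then 0 else s j) ≤ (n : ℝ) / 100 →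
        ∃ v ∈ N2, ∑ j, (y j - v j) ^ 2 ≤ (1/160 : ℝ) ^ 2 ∧ ∀ j, y j = 0 → v j = 0)
    (hL : ∀ v ∈ N2, 0 < ∑ j, v j ^ 2 →
      (n / 4 : ℝ) * ∑ j, v j ^ 2 ≤ ∑ i, (∑ j, A i j * v j) ^ 2)
    (x : Fin m → ℝ) (hx : ∀ i, ∑ j, A i j * x j = 0) (S : ℝ) (hS : 0 < S)
    (hxS : ∑ j, |x j| * Real.sqrt (s j) ≤ S) :
    nr x ≤ 80010 * (S / Real.sqrt n) := by
  classical
  set t := 100 * S / n with ht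
  have htpos : 0 < t := by positivity
  set y : Fin m → ℝ := fun j => if |x j| ≤ t * Real.sqrt (s j) then 0 else x j with hy
  set z : Fin m → ℝ := fun j => if |x j| ≤ t * Real.sqrt (s j) then x j else 0 with hz
  have hxyz : (fun j => y j + z j) = x := by
    ext j; simp only [hy, hz]; split_ifs <;> simp
  have hzx : ∀ j, |z j| ≤ |x j| := by
    intro j; simp only [hz]; split_ifs <;> simp
  have hzt : ∀ j, |z j| ≤ t * Real.sqrt (s j) := by
    intro j; simp only [hz]; split_ifs with h
    · exact h
    · simp only [abs_zero]; positivity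
  have hzS : ∑ j, |z j| * Real.sqrt (s j) ≤ S :=
    (Finset.sum_le_sum fun j _ =>
      mul_le_mul_of_nonneg_right (hzx j) (Real.sqrt_nonneg _)).trans hxS
  have hys : ∑ j, (if y j = 0 then 0 else s j) ≤ (n : ℝ) / 100 := by
    have h1 : ∀ j, t * (if y j = 0 then 0 else s j) ≤ |x j| * Real.sqrt (s j) := by
      intro j
      split_ifs with h
      · rw [mul_zero]; positivity
      · have h2 : ¬ |x j| ≤ t * Real.sqrt (s j) := by
          intro h3; apply h; simp only [hy]; rw [if_pos h3]
        push Not at h2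
        have h4 : s j = Real.sqrt (s j) * Real.sqrt (s j) := (Real.mul_self_sqrt (hs j)).symm
        calc t * s j = t * Real.sqrt (s j) * Real.sqrt (s j) := by rw [mul_assoc, ← h4]
          _ ≤ |x j| * Real.sqrt (s j) := by gcongr
    have h2 := (Finset.sum_le_sum fun j (_ : j ∈ Finset.univ) => h1 j).trans hxS
    rw [← Finset.mul_sum] at h2
    have h3 : t * ((n : ℝ) / 100) = S := by rw [ht]; field_simp
    exact le_of_mul_le_mul_left (h2.trans h3.ge) htpos
  have hyc : ((Finset.univ.filter (fun j => y j ≠ 0)).card : ℝ) ≤ b + n / 100 := by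
    have h1 : ((Finset.univ.filter (fun j => y j ≠ 0)).card : ℝ)
        ≤ ∑ j, ((if s j = 0 then (1:ℝ) else 0) + (if y j = 0 then 0 else s j)) := by
      rw [Finset.card_filter]
      push_cast
      refine Finset.sum_le_sum fun j _ => ?_
      by_cases hj : y j = 0
      · simp [hj]; split_ifs <;> norm_num
      · rcases hs1 j with h | h
        · simp [hj, h]
        · simp [hj]
          split_ifs <;> linarith
    rw [Finset.sum_add_distrib] at h1
    have h2 : ∑ j, (if s j = 0 then (1:ℝ) else 0)
        = ((Finset.univ.filter (fun j => s j = 0)).card : ℝ) := by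
      rw [Finset.card_filter]; push_cast; rfl
    linarith
  have hlow := lower1 A s hs N (b + n / 100) hN hU N2 hN2 hL y hyc hys
  have hup := upper2 A s hs N hn hN hU z S hS hzt hzS
  have heq : nr (mv A y) = nr (mv A z) := by
    have h1 := mv_add A y z
    rw [hxyz] at h1
    unfold nr
    congr 1
    refine Finset.sum_congr rfl fun i _ => ?_
    have h2 := congrFun h1 i
    have h3 : mv A x i = 0 := hx i
    rw [h3] at h2
    have : mv A y i = - mv A z i := by linarith
    rw [this, neg_sq]
  set q := Real.sqrt n with hq
  have hq0 : 0 < q := Real.sqrt_pos.2 hn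
  have hq2 : q ^ 2 = n := Real.sq_sqrt hn.le
  have hny : nr y ≤ 80000 * (S / q) := by
    rw [heq] at hlow
    rw [← mul_div_assoc, le_div_iff₀ hq0]
    linarith
  have hnz : nr z ≤ 10 * (S / q) := by
    apply Real.sqrt_le_iff.2
    refine ⟨by positivity, ?_⟩
    calc ∑ j, z j ^ 2 ≤ ∑ j, t * (|z j| * Real.sqrt (s j)) := by
          refine Finset.sum_le_sum fun j _ => ?_
          rw [← sq_abs]
          nlinarith [hzt j, abs_nonneg (z j)]
      _ ≤ t * S := by rw [← Finset.mul_sum]; gcongr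
      _ = (10 * (S / q)) ^ 2 := by
          rw [ht, mul_pow, div_pow, hq2]; ring
  have := nr_add y z
  rw [hxyz] at this
  linarith

lemma inv_sq_sum2 (M : ℕ) :
    ∑ j ∈ Finset.range M, 1 / ((j : ℝ) + 1) ^ 2 ≤ 2 - 2 / ((M : ℝ) + 1) := by
  induction M with
  | zero => simp
  | succ b ih =>
    rw [Finset.sum_range_succ]
    push_cast
    have hb : (0 : ℝ) ≤ b := by positivity
    have h3 : (1 / ((b : ℝ) + 1) ^ 2) ≤ 2 / (b + 1) - 2 / (b + 1 + 1) := by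
      rw [div_sub_div _ _ (by positivity) (by positivity),
        div_le_div_iff₀ (by positivity) (by positivity)]
      nlinarith [mul_nonneg hb hb, mul_nonneg hb (mul_nonneg hb hb)]
    linarith

lemma lpnorm_two {m : ℕ} (x : Fin m → ℝ) : lpnorm 2 x = nr x := by
  simp only [lpnorm, nr]
  rw [if_neg (by simp), Real.sqrt_eq_rpow]
  simp

lemma lpnorm_one {m : ℕ} (x : Fin m → ℝ) : lpnorm 1 x = ∑ j, |x j| := by
  simp [lpnorm]

lemma exp_w_sum (m : ℕ) (s : Fin m → ℝ) (b : ℝ)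
    (h : ∀ j : Fin m, s j = 0 ∨ s j = Real.log ((j : ℕ) + 1) + 1)
    (hb : ((Finset.univ.filter (fun j => s j = 0)).card : ℝ) ≤ b) :
    ∑ j, Real.exp (-2 * s j) ≤ b + 1 := by
  have h1 : ∀ j : Fin m, Real.exp (-2 * s j)
      ≤ (if s j = 0 then (1:ℝ) else 0) + 1/2 * (1 / (((j : ℕ) : ℝ) + 1) ^ 2) := by
    intro j
    by_cases hj : s j = 0
    · rw [hj, if_pos rfl]
      simp only [mul_zero, Real.exp_zero]
      have : (0:ℝ) ≤ 1/2 * (1 / (((j : ℕ) : ℝ) + 1) ^ 2) := by positivity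
      linarith
    · rw [if_neg hj, (h j).resolve_left hj, zero_add]
      have hp : (0:ℝ) < ((j : ℕ) : ℝ) + 1 := by positivity
      have e1 : -2 * (Real.log (((j : ℕ) : ℝ) + 1) + 1)
          = -2 + -(Real.log ((((j : ℕ) : ℝ) + 1) ^ 2)) := by
        rw [Real.log_pow]; push_cast; ring
      rw [e1, Real.exp_add, Real.exp_neg (Real.log _), Real.exp_log (by positivity), ← one_div]
      apply mul_le_mul_of_nonneg_right _ (by positivity)
      rw [Real.exp_neg, ← one_div]
      apply one_div_le_one_div_of_le (by norm_num)
      linarith [Real.add_one_le_exp (2:ℝ)]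
  refine (Finset.sum_le_sum fun j _ => h1 j).trans ?_
  rw [Finset.sum_add_distrib, ← Finset.mul_sum,
    Fin.sum_univ_eq_sum_range (fun j => 1 / ((j : ℝ) + 1) ^ 2) m]
  have h2 : ∑ j, (if s j = 0 then (1:ℝ) else 0)
        = ((Finset.univ.filter (fun j => s j = 0)).card : ℝ) := by
    rw [Finset.card_filter]; push_cast; rfl
  have h3 := inv_sq_sum2 m
  have h4 : (0:ℝ) ≤ 2 / (m + 1) := by positivity
  linarith

lemma union_bd {α β : Type*} [MeasurableSpace α] (μ : Measure α) (N : Finset β)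
    (f : β → Set α) (a b : ℝ) (hN : (N.card : ℝ) ≤ Real.exp a)
    (h : ∀ v ∈ N, μ (f v) ≤ ENNReal.ofReal (Real.exp b)) :
    μ (⋃ v ∈ N, f v) ≤ ENNReal.ofReal (Real.exp (a + b)) := by
  refine (measure_biUnion_finset_le N f).trans ((Finset.sum_le_sum h).trans ?_)
  rw [Finset.sum_const, nsmul_eq_mul, Real.exp_add, ENNReal.ofReal_mul (Real.exp_pos _).le]
  gcongr
  rw [← ENNReal.ofReal_natCast]
  exact ENNReal.ofReal_le_ofReal hN

def lowSet (n m : ℕ) (v : Fin m → ℝ) : Set (Fin n → Fin m → ℝ) :=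
  {A | 0 < ∑ j, v j ^ 2 ∧ ∑ i, (∑ j, A i j * v j) ^ 2 ≤ (n / 4 : ℝ) * ∑ j, v j ^ 2}

lemma lowSet_mem (n m : ℕ) (v : Fin m → ℝ) (A : Fin n → Fin m → ℝ) (h : 0 < ∑ j, v j ^ 2)
    (h' : ∑ i, (∑ j, A i j * v j) ^ 2 ≤ (n / 4 : ℝ) * ∑ j, v j ^ 2) : A ∈ lowSet n m v :=
  ⟨h, h'⟩

lemma lowSet_le (n m : ℕ) (v : Fin m → ℝ) : gaussianMatrix n m (lowSet n m v)
      ≤ ENNReal.ofReal (Real.exp (-(3/10) * n)) := by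
  by_cases hv : 0 < ∑ j, v j ^ 2
  · exact (measure_mono (fun A hA => hA.2)).trans (lower_tail n m v hv)
  · have : lowSet n m v = ∅ := by
      ext A
      exact ⟨fun hA => hv hA.1, fun hA => hA.elim⟩
    rw [this, measure_empty]
    exact zero_le

lemma prob_main (n m : ℕ) (hn : 1 ≤ n) (s : Fin m → ℝ)
    (h : ∀ j : Fin m, s j = 0 ∨ s j = Real.log ((j : ℕ) + 1) + 1)
    (b : ℝ) (hbn : b = (1 / 1000000 : ℝ) * n) (hb : ((Finset.univ.filter (fun j => s j = 0)).card : ℝ) ≤ b)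
    (G : Set (Fin n → Fin m → ℝ))
    (hG : ∀ A, (∀ x, (∀ i, ∑ j, A i j * x j = 0) → ∀ S, 0 < S →
      ∑ j, |x j| * Real.sqrt (s j) ≤ S → nr x ≤ 80010 * (S / Real.sqrt n)) → A ∈ G) :
    ENNReal.ofReal (1 - (Real.exp 2 + Real.exp 102400) * Real.exp (-(1/10) * n))
      ≤ gaussianMatrix n m G := by
  have hnpos : (0 : ℝ) < n := by exact_mod_cast hn
  have hlog : ∀ j : Fin m, 0 ≤ Real.log (((j : ℕ) : ℝ) + 1) := fun j =>
    Real.log_nonneg (by linarith [Nat.cast_nonneg (α := ℝ) (j : ℕ)])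
  have hs1 : ∀ j, s j = 0 ∨ 1 ≤ s j := fun j => (h j).imp id fun e => by
    rw [e]; linarith [hlog j]
  have hs : ∀ j, 0 ≤ s j := fun j => by rcases hs1 j with e | e <;> linarith
  have hT := exp_w_sum m s b h hb
  obtain ⟨N, hNc, hN1, hN⟩ := net n (fun _ => 0) (fun _ => le_rfl) n 0 (1/2) hnpos (by norm_num)
  obtain ⟨N2, hN2c, -, hN2⟩ := net m s hs (b + n / 100) (n / 100) (1/160)
    (by rw [hbn]; positivity) (by norm_num)
  set T := ∑ j, Real.exp (-2 * s j) with hTdef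
  have hU := union_bd (gaussianMatrix n m) N
    (fun v => {A | 80 * (n:ℝ) ≤ ∑ j, max ((∑ i, A i j * v i) ^ 2 - 8 * s j) 0}) _ _ hNc
    (fun v hv => upper_tail n m v (hN1 v hv) s (80 * n))
  have hLv : ∀ v ∈ N2, gaussianMatrix n m (lowSet n m v)
      ≤ ENNReal.ofReal (Real.exp (-(3/10) * n)) := fun v _ => lowSet_le n m v
  have hL := union_bd (gaussianMatrix n m) N2 (lowSet n m) _ _ hN2c hLv
  set U : Set (Fin n → Fin m → ℝ) := ⋃ v ∈ N,
    {A | 80 * (n:ℝ) ≤ ∑ j, max ((∑ i, A i j * v i) ^ 2 - 8 * s j) 0} with hUdef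
  set L : Set (Fin n → Fin m → ℝ) := ⋃ v ∈ N2, lowSet n m v with hLdef
  have hsub : (Set.univ : Set (Fin n → Fin m → ℝ)) ⊆ G ∪ (U ∪ L) := by
    intro A _
    by_cases hA : A ∈ U ∪ L
    · exact Or.inr hA
    refine Set.mem_union_left _ (hG A ?_)
    intro x hx S hS hxS
    have hAU : A ∉ U := fun h' => hA (Or.inl h')
    have hAL : A ∉ L := fun h' => hA (Or.inr h')
    simp only [hUdef, Set.mem_iUnion, Set.mem_ofPred_eq, not_exists, not_le] at hAU
    have hAL' : ∀ v ∈ N2, 0 < ∑ j, v j ^ 2 →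
        (n / 4 : ℝ) * ∑ j, v j ^ 2 ≤ ∑ i, (∑ j, A i j * v j) ^ 2 := by
      intro v hv hv2
      by_contra hc
      exact hAL (Set.mem_biUnion (Finset.mem_coe.2 hv) (lowSet_mem n m v A hv2 (not_le.1 hc).le))
    refine det_main A s hs N hnpos b hs1 hb ?_ (fun v hv => (hAU v hv).le) N2 hN2 hAL' x hx S hS hxS
    intro y hy
    obtain ⟨v, hv, hv1, -⟩ := hN y hy (by
      have := Finset.card_le_univ (Finset.univ.filter (fun j => y j ≠ 0))
      rw [Fintype.card_fin] at this
      exact_mod_cast this) (by simp)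
    exact ⟨v, hv, hv1⟩
  have : IsProbabilityMeasure (gaussianMatrix n m) := by unfold gaussianMatrix; infer_instance
  have hUL : gaussianMatrix n m U + gaussianMatrix n m L ≤
      ENNReal.ofReal ((Real.exp 2 + Real.exp 102400) * Real.exp (-(1/10) * n)) := by
    apply (add_le_add hU hL).trans
    rw [← ENNReal.ofReal_add (Real.exp_pos _).le (Real.exp_pos _).le]
    apply ENNReal.ofReal_le_ofReal
    rw [add_mul, ← Real.exp_add, ← Real.exp_add]
    apply add_le_add
    · apply Real.exp_le_exp.2
      rw [← hTdef]
      simp only [mul_zero, Real.exp_zero, Finset.sum_const, Finset.card_univ,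
        Fintype.card_fin, nsmul_eq_mul]
      norm_num
      linarith
    · apply Real.exp_le_exp.2
      norm_num
      linarith
  rw [ENNReal.ofReal_sub _ (by positivity), ENNReal.ofReal_one, tsub_le_iff_right]
  have h1 : (1 : ℝ≥0∞) ≤ gaussianMatrix n m (G ∪ (U ∪ L)) := by
    rw [← measure_univ (μ := gaussianMatrix n m)]
    exact measure_mono hsub
  have h2 := measure_union_le (μ := gaussianMatrix n m) G (U ∪ L)
  have h3 := measure_union_le (μ := gaussianMatrix n m) U L
  exact h1.trans (h2.trans (add_le_add le_rfl (h3.trans hUL)))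

/-- For `p = 1`, with probability at least `1 - c₁ exp(-c₂ n)` the
circumradius of the section of the `ℓ_1`-ellipsoid with the kernel of a Gaussian random matrix
is at most `C n^{-1/2} sup_{k ≤ j ≤ m} σ_j √(log j + 1)` with `k = max(1, ⌈c n⌉)`.
(Here `σ : Fin m → ℝ` is 0-indexed, i.e. `σ ⟨j-1⟩` is the paper's `σ_j`.) -/
theorem statement1 :
    ∃ C c c₁ c₂ : ℝ, 0 < C ∧ 0 < c ∧ 0 < c₁ ∧ 0 < c₂ ∧
      ∀ (m n : ℕ), 1 ≤ n → n < m →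
      ∀ σ : Fin m → ℝ, (∀ j, 0 < σ j) → (∀ i j : Fin m, i ≤ j → σ j ≤ σ i) →
      ENNReal.ofReal (1 - c₁ * Real.exp (-c₂ * n)) ≤
        gaussianMatrix n m {A |
          radq 2 (ellipsoid 1 σ) (kerSet A) ≤
            C * (n : ℝ) ^ (-(1 / 2 : ℝ)) *
              sSup ((fun j : Fin m => σ j * Real.sqrt (Real.log ((j : ℕ) + 1) + 1)) ''
                {j | max 1 ⌈c * (n : ℝ)⌉₊ ≤ (j : ℕ) + 1})} := by
  refine ⟨80010, 1 / 1000000, Real.exp 2 + Real.exp 102400, 1 / 10, by norm_num, by norm_num,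
    by positivity, by norm_num, ?_⟩
  intro m n hn hnm σ hσ _
  classical
  have hnpos : (0 : ℝ) < n := by exact_mod_cast hn
  set k := max 1 ⌈(1 / 1000000 : ℝ) * (n : ℝ)⌉₊ with hk
  set s : Fin m → ℝ := fun j => if k ≤ (j : ℕ) + 1 then Real.log ((j : ℕ) + 1) + 1 else 0 with hs
  set S := sSup ((fun j : Fin m => σ j * Real.sqrt (Real.log ((j : ℕ) + 1) + 1)) ''
                {j | k ≤ (j : ℕ) + 1}) with hSdef
  have hlog : ∀ j : Fin m, 0 ≤ Real.log (((j : ℕ) : ℝ) + 1) := fun j =>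
    Real.log_nonneg (by linarith [Nat.cast_nonneg (α := ℝ) (j : ℕ)])
  have hle : ∀ j : Fin m, k ≤ (j : ℕ) + 1 →
      σ j * Real.sqrt (Real.log ((j : ℕ) + 1) + 1) ≤ S := by
    intro j hj
    exact le_csSup (Set.toFinite _).bddAbove ⟨j, hj, rfl⟩
  have hkm : k ≤ m := by
    apply max_le (by omega)
    apply Nat.ceil_le.2
    have : (n : ℝ) < m := by exact_mod_cast hnm
    linarith
  have hS : 0 < S := by
    refine lt_of_lt_of_le ?_ (hle ⟨m - 1, by omega⟩ (by simp only; omega))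
    apply mul_pos (hσ _)
    apply Real.sqrt_pos.2
    linarith [hlog ⟨m - 1, by omega⟩]
  refine prob_main n m hn s ?_ _ rfl ?_ _ ?_
  · intro j
    simp only [hs]
    split_ifs
    · exact Or.inr rfl
    · exact Or.inl rfl
  · have h1 : (Finset.univ.filter (fun j => s j = 0)).card ≤ (Finset.range (k - 1)).card := by
      apply Finset.card_le_card_of_injOn (fun j : Fin m => (j : ℕ))
      · intro j hj
        have hj' := (Finset.mem_filter.1 hj).2
        simp only [hs] at hj'
        split_ifs at hj' with h
        · linarith [hlog j]
        · simp only [Finset.coe_range, Set.mem_Iio]; omega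
      · intro a _ b _ hab
        exact Fin.ext hab
    rw [Finset.card_range] at h1
    have h2 : ((k - 1 : ℕ) : ℝ) ≤ (1 / 1000000 : ℝ) * n := by
      rcases Nat.eq_zero_or_pos (k - 1) with h0 | h0
      · rw [h0]; push_cast; positivity
      · apply le_of_lt
        apply Nat.lt_ceil.1
        rcases max_cases 1 ⌈(1 / 1000000 : ℝ) * (n : ℝ)⌉₊ with ⟨h3, h4⟩ | ⟨h3, h4⟩ <;> omega
    exact le_trans (by exact_mod_cast h1) h2
  · intro A hA
    rw [Set.mem_ofPred_eq]
    have hrp : (n : ℝ) ^ (-(1 / 2 : ℝ)) = 1 / Real.sqrt n := by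
      rw [Real.rpow_neg hnpos.le, Real.sqrt_eq_rpow]
      simp
    rw [hrp]
    have hpos : 0 ≤ 80010 * (1 / Real.sqrt n) * S := by positivity
    apply Real.sSup_le _ hpos
    rintro _ ⟨x, ⟨hxE, hxK⟩, rfl⟩
    rw [lpnorm_two]
    have hx1 : ∑ j, |x j / σ j| ≤ 1 := by
      have : lpnorm 1 (fun j => x j / σ j) ≤ 1 := hxE
      rwa [lpnorm_one] at this
    have h := hA x hxK S hS ?_
    · calc nr x ≤ 80010 * (S / Real.sqrt n) := h
        _ = _ := by ring
    · calc ∑ j, |x j| * Real.sqrt (s j) ≤ ∑ j, |x j / σ j| * S := by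
            refine Finset.sum_le_sum fun j _ => ?_
            have h1 : |x j| = |x j / σ j| * σ j := by
              rw [abs_div, abs_of_pos (hσ j), div_mul_cancel₀ _ (hσ j).ne']
            rw [h1, mul_assoc]
            apply mul_le_mul_of_nonneg_left _ (abs_nonneg _)
            simp only [hs]
            split_ifs with hj
            · exact hle j hj
            · simp [hS.le]
        _ ≤ S := by
            rw [← Finset.sum_mul]
            nlinarith
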